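/- For all positive integers n and V there are only finitely many irreducible tuples (A₁,…,Aₙ) of finite subsets of ℤⁿ of lattice mixed volume V, up to the equivalence that identifies (A₁,…,Aₙ) with (φ(A₁)+v₁,…,φ(Aₙ)+vₙ) for a group automorphism φ of ℤⁿ and vectors v₁,…,vₙ ∈ ℤⁿ. -/

import Mathlib

open Pointwise MeasureTheory

namespace Esterov

/-- The standard embedding of the lattice `ℤⁿ` into `ℝⁿ`. -/
def toR {n : ℕ} (a : Fin n → ℤ) : Fin n → ℝ := fun j => (a j : ℝ)

/-- The lattice mixed volume of finite sets `A₁, …, Aₙ ⊆ ℤⁿ`: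
`MV(A₁,…,Aₙ) = ∑_{∅ ≠ S ⊆ {1,…,n}} (−1)^{n−|S|} vol (conv (∑_{i ∈ S} Aᵢ))`. -/
noncomputable def MV {n : ℕ} (A : Fin n → Finset (Fin n → ℤ)) : ℝ :=
  ∑ S ∈ Finset.univ.powerset.filter (fun S : Finset (Fin n) => S.Nonempty),
    (-1 : ℝ) ^ (n - S.card) *
      (volume (convexHull ℝ (∑ i ∈ S, toR '' (A i : Set (Fin n → ℤ))))).toReal

/-- The complex torus `(ℂ∖0)ⁿ`. -/
abbrev Torus (n : ℕ) := Fin n → ℂˣ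

/-- The index type of the coefficients of a tuple of supports. -/
abbrev CIdx {n : ℕ} (A : Fin n → Finset (Fin n → ℤ)) := Σ i : Fin n, {a : Fin n → ℤ // a ∈ A i}

/-- The space `ℂ^A = ℂ^{A₁} ⊕ ⋯ ⊕ ℂ^{Aₙ}` of systems of Laurent polynomials supported at `A`,
encoded by their coefficients. -/
abbrev Coeff {n : ℕ} (A : Fin n → Finset (Fin n → ℤ)) := CIdx A → ℂ

/-- The value of the Laurent monomial `x^a` at a point `x` of the torus. -/
noncomputable def mono {n : ℕ} (a : Fin n → ℤ) (x : Torus n) : ℂ :=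
  ∏ j, ((x j : ℂ) ^ (a j))

/-- The value of the `i`-th polynomial of the system `c ∈ ℂ^A` at `x`. -/
noncomputable def evalAt {n : ℕ} (A : Fin n → Finset (Fin n → ℤ)) (c : Coeff A) (i : Fin n)
    (x : Torus n) : ℂ :=
  ∑ a ∈ (A i).attach, c ⟨i, a⟩ * mono a.1 x

/-- `x` is a common root of the system `c ∈ ℂ^A`. -/
def IsRoot {n : ℕ} (A : Fin n → Finset (Fin n → ℤ)) (c : Coeff A) (x : Torus n) : Prop :=
  ∀ i, evalAt A c i x = 0

/-- The Jacobian matrix `(∂fᵢ/∂xⱼ (x))` of the system `c ∈ ℂ^A` at `x`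
(note `∂(x^a)/∂xⱼ = aⱼ x^a / xⱼ`). -/
noncomputable def jacobian {n : ℕ} (A : Fin n → Finset (Fin n → ℤ)) (c : Coeff A)
    (x : Torus n) : Matrix (Fin n) (Fin n) ℂ :=
  Matrix.of fun i j => (∑ a ∈ (A i).attach, c ⟨i, a⟩ * (a.1 j : ℂ) * mono a.1 x) * (x j : ℂ)⁻¹

/-- `x` is a singular root of the system `c`: a common root at which the Jacobian matrix
is degenerate. -/
def IsSingularRoot {n : ℕ} (A : Fin n → Finset (Fin n → ℤ)) (c : Coeff A) (x : Torus n) :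
    Prop :=
  IsRoot A c x ∧ (jacobian A c x).det = 0

/-- A subset of `ℂ^ι` is algebraic if it is the common zero locus of a family of polynomials. -/
def IsAlgebraicSet {ι : Type*} (Z : Set (ι → ℂ)) : Prop :=
  ∃ S : Set (MvPolynomial ι ℂ), Z = {c | ∀ p ∈ S, MvPolynomial.eval c p = 0}

/-- The Zariski closure of a subset of `ℂ^ι`. -/
def zclosure {ι : Type*} (Z : Set (ι → ℂ)) : Set (ι → ℂ) :=
  ⋂₀ {W | IsAlgebraicSet W ∧ Z ⊆ W}

/-- The ideal of polynomials vanishing on a subset of `ℂ^ι`. -/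
noncomputable def vanishingIdeal {ι : Type*} (Z : Set (ι → ℂ)) : Ideal (MvPolynomial ι ℂ) where
  carrier := {p | ∀ c ∈ Z, MvPolynomial.eval c p = 0}
  add_mem' := by
    intro p q hp hq c hc
    simp [hp c hc, hq c hc]
  zero_mem' := by
    intro c hc
    simp
  smul_mem' := by
    intro p q hq c hc
    simp [smul_eq_mul, hq c hc]

/-- The (complex) dimension of a subset of `ℂ^ι`, as the Krull dimension of the coordinate
ring of its Zariski closure. -/
noncomputable def adim {ι : Type*} (Z : Set (ι → ℂ)) : WithBot ℕ∞ :=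
  ringKrullDim (MvPolynomial ι ℂ ⧸ vanishingIdeal Z)

/-- The discriminant `D_A`: the Zariski closure of the set of systems having a singular root. -/
noncomputable def discSet {n : ℕ} (A : Fin n → Finset (Fin n → ℤ)) : Set (Coeff A) :=
  zclosure {c | ∃ x, IsSingularRoot A c x}

/-- The tuple `A` is dual effective: `D_A` is a hypersurface, i.e. has complex dimension
`dim ℂ^A − 1`. -/
def DualEffective {n : ℕ} (A : Fin n → Finset (Fin n → ℤ)) : Prop :=
  adim (discSet A) = ((Fintype.card (CIdx A) - 1 : ℕ) : WithBot ℕ∞)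

/-- The finite set `s` can be translated into the subgroup `L` of `ℤⁿ`. -/
def TranslatesInto {n : ℕ} (s : Finset (Fin n → ℤ)) (L : Submodule ℤ (Fin n → ℤ)) : Prop :=
  ∃ v : Fin n → ℤ, ∀ a ∈ s, a - v ∈ L

/-- A tuple of finite sets in `ℤⁿ` is reduced if the sets cannot all be translated into one
common proper subgroup of `ℤⁿ`. -/
def IsReducedTuple {n : ℕ} (A : Fin n → Finset (Fin n → ℤ)) : Prop :=
  ¬ ∃ L : Submodule ℤ (Fin n → ℤ), L ≠ ⊤ ∧ ∀ i, TranslatesInto (A i) L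

/-- A tuple of `n` finite sets in `ℤⁿ` is irreducible if for no `m` with `0 < m < n` can some
`n − m` of the sets be translated into one common subgroup of rank at most `n − m`. -/
def IsIrreducibleTuple {n : ℕ} (A : Fin n → Finset (Fin n → ℤ)) : Prop :=
  ¬ ∃ (I : Finset (Fin n)) (L : Submodule ℤ (Fin n → ℤ)),
      0 < I.card ∧ I.card < n ∧ Module.finrank ℤ L ≤ I.card ∧
      ∀ i ∈ I, TranslatesInto (A i) L

/-- The incidence variety `E = {(x, f) : f(x) = 0} ⊆ (ℂ∖0)ⁿ × ℂ^A`. -/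
def incidence {n : ℕ} (A : Fin n → Finset (Fin n → ℤ)) : Set (Torus n × Coeff A) :=
  {p | IsRoot A p.2 p.1}

/-- The projection `π : E → ℂ^A`. -/
def proj {n : ℕ} (A : Fin n → Finset (Fin n → ℤ)) : incidence A → Coeff A :=
  fun p => p.1.2

/-- The set of roots of the system `c`. -/
def RootSet {n : ℕ} (A : Fin n → Finset (Fin n → ℤ)) (c : Coeff A) :=
  {x : Torus n // IsRoot A c x}

/-- `γ` is a loop in `ℂ^A ∖ B` based at `f`. -/
def IsLoop {n : ℕ} (A : Fin n → Finset (Fin n → ℤ)) (B : Set (Coeff A)) (f : Coeff A)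
    (γ : unitInterval → Coeff A) : Prop :=
  Continuous γ ∧ (∀ t, γ t ∉ B) ∧ γ 0 = f ∧ γ 1 = f

/-- The loop `γ` based at `f` induces the permutation `σ` of the root set of `f` by path
lifting: for every root `x` the lift of `γ` starting at `x` ends at `σ x`. -/
def Induces {n : ℕ} (A : Fin n → Finset (Fin n → ℤ)) (γ : unitInterval → Coeff A)
    (f : Coeff A) (σ : RootSet A f → RootSet A f) : Prop :=
  ∀ x : RootSet A f, ∃ δ : unitInterval → Torus n,
    Continuous δ ∧ δ 0 = x.1 ∧ (∀ t, IsRoot A (γ t) (δ t)) ∧ δ 1 = (σ x).1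

/-!
The mixed volume of a tuple of point configurations is the integral of the mixed discriminant of
the covariance matrices of Gibbs measures on them, because the mean of a Gibbs measure
parametrises the Newton polytope and its covariance is the Jacobian of this parametrisation.
The mixed discriminant is a nonnegative combination of the squares of the transversal determinants
`det (a i - b i)`, `a i, b i ∈ A i`, so concentrating the Gibbs measures on two points `a i`, `b i`
of each set bounds every such determinant by `25 ^ n * MV A`.

If `U` is a nonsingular transversal matrix, Cramer's rule embeds `ℤⁿ` into itself so that the rows
of `U` become multiples of unit vectors. Irreducibility says that any two coordinates are joined by
a chain of sets `A i` containing vectors with suitable nonzero coordinates. Along a shortest chain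
the transversal matrices are Hessenberg, and their bounded determinants bound all coordinates of
all the sets. The image of `ℤⁿ` contains `N ℤⁿ` for a bounded `N`, which leaves finitely many
images and finitely many configurations inside a cube.
-/

/-! ### Gibbs measures on finite point configurations -/

section Gibbs

variable {ι : Type*} [Fintype ι]

/-- The linear functional `x ↦ ⟨a, x⟩`, bundled for use as a Fréchet derivative. -/
noncomputable def dotCLM (a : ι → ℝ) : (ι → ℝ) →L[ℝ] ℝ :=
  LinearMap.toContinuousLinearMap (dotProductBilin ℝ ℝ a)

@[simp] theorem dotCLM_apply (a x : ι → ℝ) : dotCLM a x = a ⬝ᵥ x := rfl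

theorem hasFDerivAt_dotProduct (a x : ι → ℝ) : HasFDerivAt (fun y => a ⬝ᵥ y) (dotCLM a) x :=
  (dotCLM a).hasFDerivAt

/-- The log-partition function `x ↦ log ∑ exp (⟨a, x⟩ + h a)` of a finite point set `s` with
log-weights `h`. Its gradient parametrises the Newton polytope `conv s`. -/
noncomputable def logPartition (s : Finset (ι → ℝ)) (h : (ι → ℝ) → ℝ) (x : ι → ℝ) : ℝ :=
  Real.log (∑ a ∈ s, Real.exp (a ⬝ᵥ x + h a))

/-- The probability of `a` under the Gibbs measure on `s` with log-weights `h`, tilted by the linear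
functional `⟨·, x⟩`. -/
noncomputable def gibbsWeight (s : Finset (ι → ℝ)) (h : (ι → ℝ) → ℝ) (x a : ι → ℝ) : ℝ :=
  Real.exp (a ⬝ᵥ x + h a - logPartition s h x)

/-- The mean of the Gibbs measure on `s`, i.e. the gradient of `logPartition`. -/
noncomputable def gibbsMean (s : Finset (ι → ℝ)) (h : (ι → ℝ) → ℝ) (x : ι → ℝ) : ι → ℝ :=
  ∑ a ∈ s, gibbsWeight s h x a • a

/-- The covariance matrix of the Gibbs measure on `s`, i.e. the Hessian of `logPartition`, written
in terms of the differences of an independent pair so that it is visibly a nonnegative combination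
of squares. -/
noncomputable def gibbsCov (s : Finset (ι → ℝ)) (h : (ι → ℝ) → ℝ) (x : ι → ℝ) : Matrix ι ι ℝ :=
  ∑ e ∈ s ×ˢ s, (gibbsWeight s h x e.1 * gibbsWeight s h x e.2 / 2) •
    Matrix.vecMulVec (e.1 - e.2) (e.1 - e.2)

variable {s : Finset (ι → ℝ)} {h : (ι → ℝ) → ℝ}

theorem exp_logPartition (hs : s.Nonempty) (x : ι → ℝ) :
    Real.exp (logPartition s h x) = ∑ a ∈ s, Real.exp (a ⬝ᵥ x + h a) :=
  Real.exp_log (Finset.sum_pos (fun _ _ => Real.exp_pos _) hs)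

theorem sum_gibbsWeight (hs : s.Nonempty) (x : ι → ℝ) : ∑ a ∈ s, gibbsWeight s h x a = 1 := by
  simp only [gibbsWeight, Real.exp_sub, ← Finset.sum_div, ← exp_logPartition hs,
    div_self (Real.exp_ne_zero _)]

theorem gibbsMean_mem_convexHull (hs : s.Nonempty) (x : ι → ℝ) :
    gibbsMean s h x ∈ convexHull ℝ (s : Set (ι → ℝ)) :=
  (convex_convexHull ℝ _).sum_mem (fun _ _ => (Real.exp_pos _).le) (sum_gibbsWeight hs x)
    fun _ ha => subset_convexHull ℝ _ ha

theorem gibbsMean_dotProduct (x v : ι → ℝ) :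
    gibbsMean s h x ⬝ᵥ v = ∑ a ∈ s, gibbsWeight s h x a * a ⬝ᵥ v := by
  simp only [gibbsMean, sum_dotProduct, smul_dotProduct, smul_eq_mul]

theorem hasFDerivAt_logPartition (hs : s.Nonempty) (x : ι → ℝ) :
    HasFDerivAt (logPartition s h) (dotCLM (gibbsMean s h x)) x := by
  have hsum : HasFDerivAt (fun y => ∑ a ∈ s, Real.exp (a ⬝ᵥ y + h a))
      (∑ a ∈ s, Real.exp (a ⬝ᵥ x + h a) • dotCLM a) x :=
    HasFDerivAt.fun_sum fun a _ => ((hasFDerivAt_dotProduct a x).add_const (h a)).exp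
  refine (hsum.log ?_).congr_fderiv ?_
  · rw [← exp_logPartition hs]
    exact Real.exp_ne_zero _
  · ext v
    simp only [← exp_logPartition hs, smul_apply,
      sum_apply, dotCLM_apply, gibbsMean_dotProduct, gibbsWeight,
      Real.exp_sub, smul_eq_mul, Finset.mul_sum]
    exact Finset.sum_congr rfl fun a _ => by ring

theorem hasFDerivAt_gibbsWeight (hs : s.Nonempty) (x a : ι → ℝ) :
    HasFDerivAt (fun y => gibbsWeight s h y a)
      (gibbsWeight s h x a • (dotCLM a - dotCLM (gibbsMean s h x))) x :=
  (((hasFDerivAt_dotProduct a x).add_const (h a)).sub (hasFDerivAt_logPartition hs x)).exp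

theorem gibbsCov_mulVec (x v : ι → ℝ) :
    (gibbsCov s h x).mulVec v = ∑ e ∈ s ×ˢ s,
      (gibbsWeight s h x e.1 * gibbsWeight s h x e.2 / 2 * (e.1 - e.2) ⬝ᵥ v) • (e.1 - e.2) := by
  simp only [gibbsCov, Matrix.sum_mulVec, Matrix.smul_mulVec, Matrix.vecMulVec_mulVec,
    op_smul_eq_smul, smul_smul]

theorem gibbsCov_mulVec_eq_centered (hs : s.Nonempty) (x v : ι → ℝ) :
    (gibbsCov s h x).mulVec v =
      ∑ a ∈ s, (gibbsWeight s h x a * (a ⬝ᵥ v - gibbsMean s h x ⬝ᵥ v)) • a := by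
  set w := gibbsWeight s h x
  have hcenter : ∀ a, ∑ b ∈ s, w a * w b * (a - b) ⬝ᵥ v =
      w a * (a ⬝ᵥ v - gibbsMean s h x ⬝ᵥ v) := fun a => by
    simp only [gibbsMean_dotProduct, sub_dotProduct, mul_sub, Finset.sum_sub_distrib,
      ← Finset.sum_mul, ← Finset.mul_sum, mul_assoc]
    rw [sum_gibbsWeight hs, one_mul]
  calc (gibbsCov s h x).mulVec v
      = (1 / 2 : ℝ) • (∑ a ∈ s, ∑ b ∈ s, (w a * w b * (a - b) ⬝ᵥ v) • a
          + ∑ a ∈ s, ∑ b ∈ s, (w b * w a * (b - a) ⬝ᵥ v) • b) := by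
        rw [gibbsCov_mulVec, Finset.sum_product]
        simp only [Finset.smul_sum, ← Finset.sum_add_distrib]
        refine Finset.sum_congr rfl fun a _ => Finset.sum_congr rfl fun b _ => ?_
        simp only [← neg_sub a b, neg_dotProduct]
        module
    _ = ∑ a ∈ s, ∑ b ∈ s, (w a * w b * (a - b) ⬝ᵥ v) • a := by
        rw [Finset.sum_comm (f := fun a b => (w b * w a * (b - a) ⬝ᵥ v) • b)]
        module
    _ = _ := by simp only [← Finset.sum_smul, hcenter]

theorem continuous_gibbsWeight (hs : s.Nonempty) (a : ι → ℝ) :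
    Continuous fun x => gibbsWeight s h x a :=
  continuous_iff_continuousAt.2 fun x => (hasFDerivAt_gibbsWeight hs x a).continuousAt

theorem continuous_gibbsCov (hs : s.Nonempty) : Continuous (gibbsCov s h) :=
  continuous_finsetSum _ fun e _ => (((continuous_gibbsWeight hs e.1).mul
    (continuous_gibbsWeight hs e.2)).div_const 2).smul continuous_const

theorem posSemidef_gibbsCov (x : ι → ℝ) : (gibbsCov s h x).PosSemidef :=
  Matrix.posSemidef_sum _ fun e _ =>
    (Matrix.posSemidef_vecMulVec_self_star (e.1 - e.2)).smul (by unfold gibbsWeight; positivity)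

theorem hasFDerivAt_gibbsMean [DecidableEq ι] (hs : s.Nonempty) (x : ι → ℝ) :
    HasFDerivAt (gibbsMean s h)
      (LinearMap.toContinuousLinearMap (Matrix.toLin' (gibbsCov s h x))) x := by
  refine (HasFDerivAt.fun_sum fun a _ =>
    (hasFDerivAt_gibbsWeight hs x a).smul_const a).congr_fderiv ?_
  ext1 v
  simp [gibbsCov_mulVec_eq_centered hs]

theorem dotProduct_add_le_logPartition {a : ι → ℝ} (ha : a ∈ s) (x : ι → ℝ) :
    a ⬝ᵥ x + h a ≤ logPartition s h x :=
  (Real.le_log_iff_exp_le (Finset.sum_pos (fun _ _ => Real.exp_pos _) ⟨a, ha⟩)).2 <|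
    Finset.single_le_sum (f := fun a => Real.exp (a ⬝ᵥ x + h a))
      (fun _ _ => (Real.exp_pos _).le) ha

theorem exists_dotProduct_le_logPartition_add (s : Finset (ι → ℝ)) (h : (ι → ℝ) → ℝ) :
    ∃ M : ℝ, ∀ x, ∀ z ∈ convexHull ℝ (s : Set (ι → ℝ)), z ⬝ᵥ x ≤ logPartition s h x + M := by
  obtain ⟨M, hM⟩ := (s.image fun a => -h a).bddAbove
  refine ⟨M, fun x => convexHull_min (fun a ha => ?_) <|
    convex_halfSpace_le ((dotProductBilin ℝ ℝ).flip x).isLinear _⟩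
  have hle := dotProduct_add_le_logPartition (h := h) ha x
  have hMa : -h a ≤ M := hM (Finset.mem_coe.2 (Finset.mem_image_of_mem _ ha))
  change a ⬝ᵥ x ≤ _
  linarith

theorem log_gibbsWeight (x a : ι → ℝ) :
    Real.log (gibbsWeight s h x a) = a ⬝ᵥ x + h a - logPartition s h x :=
  Real.log_exp _

theorem gibbsMean_sub_dotProduct_sub (hs : s.Nonempty) (x y : ι → ℝ) :
    (gibbsMean s h x - gibbsMean s h y) ⬝ᵥ (x - y) =
      ∑ a ∈ s, (gibbsWeight s h x a - gibbsWeight s h y a) *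
        (Real.log (gibbsWeight s h x a) - Real.log (gibbsWeight s h y a)) := by
  have hcancel : ∑ a ∈ s, (gibbsWeight s h x a - gibbsWeight s h y a) *
      (logPartition s h x - logPartition s h y) = 0 := by
    rw [← Finset.sum_mul, Finset.sum_sub_distrib, sum_gibbsWeight hs, sum_gibbsWeight hs,
      sub_self, zero_mul]
  rw [sub_dotProduct, gibbsMean_dotProduct, gibbsMean_dotProduct, ← Finset.sum_sub_distrib,
    ← sub_zero (Finset.sum _ _), ← hcancel, ← Finset.sum_sub_distrib]
  refine Finset.sum_congr rfl fun a _ => ?_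
  rw [log_gibbsWeight, log_gibbsWeight, dotProduct_sub]
  ring

theorem gibbsWeight_sub_mul_log_sub_nonneg (x y a : ι → ℝ) :
    0 ≤ (gibbsWeight s h x a - gibbsWeight s h y a) *
      (Real.log (gibbsWeight s h x a) - Real.log (gibbsWeight s h y a)) := by
  simp only [log_gibbsWeight]
  exact monovary_iff_forall_mul_nonneg.1 (Real.exp_monotone.monovary monotone_id) _ _

theorem gibbsMean_sub_dotProduct_sub_nonneg (hs : s.Nonempty) (x y : ι → ℝ) :
    0 ≤ (gibbsMean s h x - gibbsMean s h y) ⬝ᵥ (x - y) := by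
  rw [gibbsMean_sub_dotProduct_sub hs]
  exact Finset.sum_nonneg fun a _ => gibbsWeight_sub_mul_log_sub_nonneg x y a

theorem dotProduct_sub_eq_of_gibbsMean_sub_eq_zero (hs : s.Nonempty) {x y : ι → ℝ}
    (h0 : (gibbsMean s h x - gibbsMean s h y) ⬝ᵥ (x - y) = 0) {a b : ι → ℝ} (ha : a ∈ s)
    (hb : b ∈ s) : (a - b) ⬝ᵥ (x - y) = 0 := by
  rw [gibbsMean_sub_dotProduct_sub hs, Finset.sum_eq_zero_iff_of_nonneg fun a _ =>
    gibbsWeight_sub_mul_log_sub_nonneg x y a] at h0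
  have hconst : ∀ c ∈ s, c ⬝ᵥ (x - y) = logPartition s h x - logPartition s h y := by
    intro c hc
    have heq : c ⬝ᵥ x + h c - logPartition s h x = c ⬝ᵥ y + h c - logPartition s h y := by
      rcases mul_eq_zero.1 (h0 c hc) with hw | hlog
      · exact Real.exp_injective (sub_eq_zero.1 hw)
      · simpa only [log_gibbsWeight] using sub_eq_zero.1 hlog
    rw [dotProduct_sub]
    linarith
  rw [sub_dotProduct, hconst a ha, hconst b hb, sub_self]

end Gibbs

section NewtonPolytope

variable {ι κ : Type*} [Fintype ι] {K : κ → Finset (ι → ℝ)}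

theorem norm_le_sum_abs (x : ι → ℝ) : ‖x‖ ≤ ∑ j, |x j| :=
  (pi_norm_le_iff_of_nonneg (Finset.sum_nonneg fun _ _ => abs_nonneg _)).2 fun j =>
    Finset.single_le_sum (f := fun j => |x j|) (fun _ _ => abs_nonneg _) (Finset.mem_univ j)

theorem exists_dotProduct_add_mul_norm_le {C : Set (ι → ℝ)} {y : ι → ℝ} (hy : y ∈ interior C) :
    ∃ r > 0, ∀ x : ι → ℝ, ∃ z ∈ C, y ⬝ᵥ x + r * ‖x‖ ≤ z ⬝ᵥ x := by
  obtain ⟨r, hr, hball⟩ := Metric.nhds_basis_closedBall.mem_iff.1 (mem_interior_iff_mem_nhds.1 hy)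
  refine ⟨r, hr, fun x => ⟨y + r • fun j => (SignType.sign (x j) : ℝ), hball ?_, ?_⟩⟩
  · have hsign : ‖fun j => (SignType.sign (x j) : ℝ)‖ ≤ 1 :=
      (pi_norm_le_iff_of_nonneg zero_le_one).2 fun j => by
        rcases SignType.sign (x j) with _ | _ | _ <;> simp
    rw [mem_closedBall_iff_norm, add_sub_cancel_left, norm_smul, Real.norm_of_nonneg hr.le]
    exact mul_le_of_le_one_right hr.le hsign
  · have hdot : (fun j => (SignType.sign (x j) : ℝ)) ⬝ᵥ x = ∑ j, |x j| :=
      Finset.sum_congr rfl fun j _ => sign_mul_self (x j)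
    rw [add_dotProduct, smul_dotProduct, hdot, smul_eq_mul]
    gcongr
    exact norm_le_sum_abs x

variable (hK : ∀ i, (K i).Nonempty) (h : κ → (ι → ℝ) → ℝ) (S : Finset κ)
include hK

theorem sum_gibbsMean_mem_convexHull (x : ι → ℝ) :
    ∑ i ∈ S, gibbsMean (K i) (h i) x ∈ convexHull ℝ (∑ i ∈ S, (K i : Set (ι → ℝ))) := by
  rw [convexHull_sum]
  exact Set.finsetSum_mem_finsetSum S _ _ fun i _ => gibbsMean_mem_convexHull (hK i) x

-- The mean vector equals `y` exactly at the critical points of the convex function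
-- `∑ logPartition - ⟨y, ·⟩`, which is coercive when `y` is interior.
theorem interior_subset_range_sum_gibbsMean :
    interior (convexHull ℝ (∑ i ∈ S, (K i : Set (ι → ℝ)))) ⊆
      Set.range fun x => ∑ i ∈ S, gibbsMean (K i) (h i) x := by
  intro y hy
  choose M hM using fun i => exists_dotProduct_le_logPartition_add (K i) (h i)
  let G : (ι → ℝ) → ℝ := fun x => ∑ i ∈ S, logPartition (K i) (h i) x - y ⬝ᵥ x
  have hG : ∀ x, HasFDerivAt G (∑ i ∈ S, dotCLM (gibbsMean (K i) (h i) x) - dotCLM y) x :=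
    fun x => (HasFDerivAt.fun_sum fun i _ => hasFDerivAt_logPartition (hK i) x).sub
      (hasFDerivAt_dotProduct y x)
  obtain ⟨r, hr, hsupport⟩ := exists_dotProduct_add_mul_norm_le hy
  have hcoercive : ∀ x, r * ‖x‖ - ∑ i ∈ S, M i ≤ G x := by
    intro x
    obtain ⟨z, hz, hzx⟩ := hsupport x
    rw [convexHull_sum, Set.mem_finsetSum] at hz
    obtain ⟨g, hg, rfl⟩ := hz
    have hle : (∑ i ∈ S, g i) ⬝ᵥ x ≤ ∑ i ∈ S, (logPartition (K i) (h i) x + M i) := by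
      rw [sum_dotProduct]
      exact Finset.sum_le_sum fun i hi => hM i x _ (hg hi)
    rw [Finset.sum_add_distrib] at hle
    simp only [G]
    linarith
  have htop : Filter.Tendsto G (Filter.cocompact _) Filter.atTop :=
    Filter.tendsto_atTop_mono hcoercive <| Filter.tendsto_atTop_add_const_right _ _ <|
      tendsto_norm_cocompact_atTop.const_mul_atTop hr
  obtain ⟨x, hx⟩ := (continuous_iff_continuousAt.2 fun x => (hG x).continuousAt).exists_forall_le
    htop
  have hcrit := IsLocalMin.hasFDerivAt_eq_zero (Filter.Eventually.of_forall hx) (hG x)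
  refine ⟨x, sub_eq_zero.1 <| dotProduct_eq_zero_iff.1 fun v => ?_⟩
  simpa [sub_dotProduct, sum_dotProduct] using DFunLike.congr_fun hcrit v

theorem volume_range_sum_gibbsMean :
    volume (Set.range fun x => ∑ i ∈ S, gibbsMean (K i) (h i) x) =
      volume (convexHull ℝ (∑ i ∈ S, (K i : Set (ι → ℝ)))) := by
  refine le_antisymm (measure_mono ?_) ?_
  · rintro _ ⟨x, rfl⟩
    exact sum_gibbsMean_mem_convexHull hK h S x
  · rw [← measure_congr (interior_ae_eq_of_null_frontier
      ((convex_convexHull ℝ _).addHaar_frontier volume))]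
    exact measure_mono (interior_subset_range_sum_gibbsMean hK h S)

variable [DecidableEq ι]

theorem hasFDerivAt_sum_gibbsMean (x : ι → ℝ) :
    HasFDerivAt (fun x => ∑ i ∈ S, gibbsMean (K i) (h i) x)
      (LinearMap.toContinuousLinearMap (Matrix.toLin' (∑ i ∈ S, gibbsCov (K i) (h i) x))) x :=
  (HasFDerivAt.fun_sum fun i _ => hasFDerivAt_gibbsMean (hK i) x).congr_fderiv (by
    simp only [map_sum])

theorem det_sum_gibbsCov_eq_zero_of_not_injective
    (hinj : ¬ Function.Injective fun x => ∑ i ∈ S, gibbsMean (K i) (h i) x) (z : ι → ℝ) :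
    (∑ i ∈ S, gibbsCov (K i) (h i) z).det = 0 := by
  simp only [Function.Injective, not_forall] at hinj
  obtain ⟨x, y, hxy, hne⟩ := hinj
  have hsum : ∑ i ∈ S, (gibbsMean (K i) (h i) x - gibbsMean (K i) (h i) y) ⬝ᵥ (x - y) = 0 := by
    rw [← sum_dotProduct, Finset.sum_sub_distrib, hxy, sub_self, zero_dotProduct]
  rw [Finset.sum_eq_zero_iff_of_nonneg fun i _ =>
    gibbsMean_sub_dotProduct_sub_nonneg (hK i) x y] at hsum
  refine Matrix.exists_mulVec_eq_zero_iff.1 ⟨x - y, sub_ne_zero.2 hne, ?_⟩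
  rw [Matrix.sum_mulVec]
  refine Finset.sum_eq_zero fun i hi => ?_
  rw [gibbsCov_mulVec]
  refine Finset.sum_eq_zero fun e he => ?_
  rw [dotProduct_sub_eq_of_gibbsMean_sub_eq_zero (hK i) (hsum i hi) (Finset.mem_product.1 he).1
    (Finset.mem_product.1 he).2, mul_zero, zero_smul]

theorem lintegral_det_sum_gibbsCov :
    ∫⁻ x, ENNReal.ofReal (∑ i ∈ S, gibbsCov (K i) (h i) x).det =
      volume (convexHull ℝ (∑ i ∈ S, (K i : Set (ι → ℝ)))) := by
  have hdet : ∀ x, (LinearMap.toContinuousLinearMap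
      (Matrix.toLin' (∑ i ∈ S, gibbsCov (K i) (h i) x))).det =
        (∑ i ∈ S, gibbsCov (K i) (h i) x).det := fun x => by
    rw [LinearMap.det_toContinuousLinearMap, LinearMap.det_toLin']
  rw [← volume_range_sum_gibbsMean hK h S, ← Set.image_univ]
  by_cases hinj : Function.Injective fun x => ∑ i ∈ S, gibbsMean (K i) (h i) x
  · have hnonneg : ∀ x, 0 ≤ (∑ i ∈ S, gibbsCov (K i) (h i) x).det := fun x =>
      (Matrix.posSemidef_sum S fun i _ => posSemidef_gibbsCov x).det_nonneg
    rw [← lintegral_abs_det_fderiv_eq_addHaar_image volume MeasurableSet.univ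
      (fun x _ => (hasFDerivAt_sum_gibbsMean hK h S x).hasFDerivWithinAt) hinj.injOn]
    simp only [hdet, abs_of_nonneg (hnonneg _), Measure.restrict_univ]
  · have hzero := det_sum_gibbsCov_eq_zero_of_not_injective hK h S hinj
    rw [addHaar_image_eq_zero_of_det_fderivWithin_eq_zero volume
      (fun x _ => (hasFDerivAt_sum_gibbsMean hK h S x).hasFDerivWithinAt)
      fun x _ => (hdet x).trans (hzero x)]
    simp [hzero]

end NewtonPolytope

/-! ### Mixed discriminants -/

section MixedDiscriminant

variable {ι R : Type*} [Fintype ι] [DecidableEq ι] [CommRing R]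

theorem sum_superset_neg_one_pow_card_compl (T : Finset ι) :
    ∑ S : Finset ι, (if T ⊆ S then (-1 : R) ^ Sᶜ.card else 0) =
      if T = Finset.univ then 1 else 0 := by
  calc ∑ S : Finset ι, (if T ⊆ S then (-1 : R) ^ Sᶜ.card else 0)
      = ∑ U : Finset ι, if U ⊆ Tᶜ then (-1 : R) ^ U.card else 0 := by
        rw [← Equiv.sum_comp compl_involutive.toPerm]
        simp [Finset.subset_compl_comm]
    _ = ((∑ U ∈ (Tᶜ).powerset, (-1) ^ U.card : ℤ) : R) := by
        rw [← Finset.sum_filter, Finset.filter_subset_univ]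
        push_cast
        rfl
    _ = _ := by
        rw [Finset.sum_powerset_neg_one_pow_card]
        simp [Finset.compl_eq_empty_iff]

theorem sum_neg_one_pow_smul_map_sum {M N : Type*} [AddCommGroup M] [AddCommGroup N] [Module R M]
    [Module R N] (f : MultilinearMap R (fun _ : ι => M) N) (g : ι → ι → M) :
    ∑ S : Finset ι, (-1 : R) ^ Sᶜ.card • f (fun r => ∑ i ∈ S, g i r) =
      ∑ σ : Equiv.Perm ι, f fun r => g (σ r) r := by
  calc ∑ S : Finset ι, (-1 : R) ^ Sᶜ.card • f (fun r => ∑ i ∈ S, g i r)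
      = ∑ S : Finset ι, ∑ p : ι → ι, (if Finset.univ.image p ⊆ S then (-1 : R) ^ Sᶜ.card else 0) •
          f fun r => g (p r) r := by
        refine Finset.sum_congr rfl fun S _ => ?_
        simp only [f.map_sum_finset, Finset.smul_sum, ite_smul, zero_smul, ← Finset.sum_filter]
        refine Finset.sum_congr ?_ fun p _ => rfl
        ext p
        simp [Finset.image_subset_iff]
    _ = ∑ p : ι → ι, if Function.Bijective p then f fun r => g (p r) r else 0 := by
        rw [Finset.sum_comm]
        refine Finset.sum_congr rfl fun p _ => ?_
        have himage : Finset.univ.image p = Finset.univ ↔ Function.Bijective p := by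
          rw [← Finite.surjective_iff_bijective, Finset.eq_univ_iff_forall]
          simp [Function.Surjective]
        rw [← Finset.sum_smul, sum_superset_neg_one_pow_card_compl]
        simp only [himage, ite_smul, one_smul, zero_smul]
    _ = ∑ σ : Equiv.Perm ι, f fun r => g (σ r) r := by
        rw [← Finset.sum_filter]
        exact (Finset.sum_bij' (fun (σ : Equiv.Perm ι) _ => (σ : ι → ι))
          (fun p hp => Equiv.ofBijective p (Finset.mem_filter.1 hp).2)
          (fun σ _ => Finset.mem_filter.2 ⟨Finset.mem_univ _, σ.bijective⟩)
          (fun _ _ => Finset.mem_univ _) (fun _ _ => Equiv.ext fun _ => rfl) (fun _ _ => rfl)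
          fun _ _ => rfl).symm

/-- The mixed discriminant of a tuple of square matrices, normalised so that on a constant tuple
`H` it is `n!` times `det H`. -/
def mixedDiscriminant (H : ι → Matrix ι ι R) : R :=
  ∑ σ : Equiv.Perm ι, (Matrix.of fun r => H (σ r) r).det

theorem sum_neg_one_pow_mul_det_sum (H : ι → Matrix ι ι R) :
    ∑ S : Finset ι, (-1 : R) ^ Sᶜ.card * (∑ i ∈ S, H i).det = mixedDiscriminant H := by
  have hdet : ∀ S : Finset ι, (∑ i ∈ S, H i).det =
      Matrix.detRowAlternating.toMultilinearMap fun r => ∑ i ∈ S, H i r := fun S =>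
    congrArg Matrix.det (funext fun r => Finset.sum_apply r S H)
  simp only [hdet, ← smul_eq_mul]
  exact sum_neg_one_pow_smul_map_sum Matrix.detRowAlternating.toMultilinearMap fun i r => H i r

theorem mixedDiscriminant_eq_sum_sign (H : ι → Matrix ι ι R) :
    mixedDiscriminant H = ∑ σ : Equiv.Perm ι, ((Equiv.Perm.sign σ : ℤ) : R) *
      (Matrix.of fun i => H i (σ i)).det := by
  rw [mixedDiscriminant, ← Equiv.sum_comp (Equiv.inv (Equiv.Perm ι))]
  refine Finset.sum_congr rfl fun σ _ => ?_
  rw [← Equiv.Perm.sign_inv, ← Matrix.det_permute]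
  congr 1
  ext r t
  simp

theorem mixedDiscriminant_sum_vecMulVec {κ : Type*} (E : ι → Finset κ)
    (q : ι → κ → R) (v : κ → ι → R) :
    mixedDiscriminant (fun i => ∑ e ∈ E i, q i e • Matrix.vecMulVec (v e) (v e)) =
      ∑ e ∈ Fintype.piFinset E, (∏ i, q i (e i)) * (Matrix.of fun i => v (e i)).det ^ 2 := by
  classical
  have hexpand : ∀ σ : Equiv.Perm ι,
      (Matrix.of fun i => (∑ e ∈ E i, q i e • Matrix.vecMulVec (v e) (v e)) (σ i)).det =
        ∑ e ∈ Fintype.piFinset E, (∏ i, q i (e i) * v (e i) (σ i)) *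
          (Matrix.of fun i => v (e i)).det := by
    intro σ
    have hrows : (Matrix.of fun i => (∑ e ∈ E i, q i e • Matrix.vecMulVec (v e) (v e)) (σ i)) =
        fun i => ∑ e ∈ E i, (q i e * v e (σ i)) • v e := by
      ext i t
      simp [Matrix.sum_apply, Finset.sum_apply, Matrix.vecMulVec_apply, mul_assoc]
    rw [hrows]
    change Matrix.detRowAlternating.toMultilinearMap _ = _
    rw [MultilinearMap.map_sum_finset]
    exact Finset.sum_congr rfl fun e _ => MultilinearMap.map_smul_univ _ _ _
  simp only [mixedDiscriminant_eq_sum_sign, hexpand, Finset.mul_sum]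
  rw [Finset.sum_comm]
  refine Finset.sum_congr rfl fun e _ => ?_
  have hdet : (Matrix.of fun i => v (e i)).det =
      ∑ σ : Equiv.Perm ι, ((Equiv.Perm.sign σ : ℤ) : R) * ∏ i, v (e i) (σ i) := by
    rw [← Matrix.det_transpose, Matrix.det_apply']
    rfl
  rw [pow_two]
  nth_rw 2 [hdet]
  simp only [Finset.sum_mul, Finset.mul_sum, Finset.prod_mul_distrib]
  exact Finset.sum_congr rfl fun σ _ => by ring

end MixedDiscriminant

/-! ### The mixed volume as an integral -/

section MixedVolume

variable {ι : Type*} [Fintype ι] [DecidableEq ι]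

/-- The mixed volume of the polytopes `conv (K i)`, normalised so that the mixed volume of `n`
copies of `P` is `n! vol P`. -/
noncomputable def mixedVolume (K : ι → Finset (ι → ℝ)) : ℝ :=
  ∑ S : Finset ι, (-1 : ℝ) ^ Sᶜ.card *
    (volume (convexHull ℝ (∑ i ∈ S, (K i : Set (ι → ℝ))))).toReal

/-- The density whose integral is the mixed volume: the mixed discriminant of the covariance
matrices of the Gibbs measures on `K i` with log-weights `h i`. -/
noncomputable def mixedDensity (K : ι → Finset (ι → ℝ)) (h : ι → (ι → ℝ) → ℝ) (x : ι → ℝ) : ℝ :=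
  mixedDiscriminant fun i => gibbsCov (K i) (h i) x

theorem mixedDensity_eq_sum_det (K : ι → Finset (ι → ℝ)) (h : ι → (ι → ℝ) → ℝ) :
    mixedDensity K h = fun x => ∑ S : Finset ι,
      (-1 : ℝ) ^ Sᶜ.card * (∑ i ∈ S, gibbsCov (K i) (h i) x).det :=
  funext fun _ => (sum_neg_one_pow_mul_det_sum _).symm

theorem mixedDensity_eq_sum (K : ι → Finset (ι → ℝ)) (h : ι → (ι → ℝ) → ℝ) (x : ι → ℝ) :
    mixedDensity K h x = ∑ e ∈ Fintype.piFinset (fun i => K i ×ˢ K i),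
      (∏ i, gibbsWeight (K i) (h i) x (e i).1 * gibbsWeight (K i) (h i) x (e i).2 / 2) *
        (Matrix.of fun i => (e i).1 - (e i).2).det ^ 2 :=
  mixedDiscriminant_sum_vecMulVec _ _ fun e : (ι → ℝ) × (ι → ℝ) => e.1 - e.2

theorem prod_mul_det_sq_le_mixedDensity {K : ι → Finset (ι → ℝ)} (h : ι → (ι → ℝ) → ℝ)
    {a b : ι → ι → ℝ} (ha : ∀ i, a i ∈ K i) (hb : ∀ i, b i ∈ K i) (x : ι → ℝ) :
    (∏ i, gibbsWeight (K i) (h i) x (a i) * gibbsWeight (K i) (h i) x (b i) / 2) *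
      (Matrix.of fun i => a i - b i).det ^ 2 ≤ mixedDensity K h x := by
  have hmem : (fun i => (a i, b i)) ∈ Fintype.piFinset fun i => K i ×ˢ K i :=
    Fintype.mem_piFinset.2 fun i => Finset.mk_mem_product (ha i) (hb i)
  rw [mixedDensity_eq_sum]
  refine le_of_eq_of_le ?_ (Finset.single_le_sum (fun e _ => ?_) hmem)
  · rfl
  · unfold gibbsWeight
    positivity

theorem mixedDensity_nonneg (K : ι → Finset (ι → ℝ)) (h : ι → (ι → ℝ) → ℝ) (x : ι → ℝ) :
    0 ≤ mixedDensity K h x := by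
  rw [mixedDensity_eq_sum]
  unfold gibbsWeight
  positivity

section Nonempty

variable {K : ι → Finset (ι → ℝ)} (hK : ∀ i, (K i).Nonempty) (h : ι → (ι → ℝ) → ℝ)
include hK

theorem integrable_det_sum_gibbsCov (S : Finset ι) :
    Integrable fun x => (∑ i ∈ S, gibbsCov (K i) (h i) x).det := by
  have hcont : Continuous fun x => (∑ i ∈ S, gibbsCov (K i) (h i) x).det :=
    (continuous_finsetSum _ fun i _ => continuous_gibbsCov (hK i)).matrix_det
  refine ⟨hcont.aestronglyMeasurable, ?_⟩
  rw [hasFiniteIntegral_iff_ofReal (Filter.Eventually.of_forall fun x =>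
    (Matrix.posSemidef_sum S fun i _ => posSemidef_gibbsCov x).det_nonneg),
    lintegral_det_sum_gibbsCov hK h S]
  have hfinite : (∑ i ∈ S, (K i : Set (ι → ℝ))).Finite := by
    rw [← Finset.coe_sum]
    exact Finset.finite_toSet _
  exact (hfinite.isCompact_convexHull (𝕜 := ℝ)).measure_lt_top

theorem integral_det_sum_gibbsCov (S : Finset ι) :
    ∫ x, (∑ i ∈ S, gibbsCov (K i) (h i) x).det =
      (volume (convexHull ℝ (∑ i ∈ S, (K i : Set (ι → ℝ))))).toReal := by
  rw [integral_eq_lintegral_of_nonneg_ae (Filter.Eventually.of_forall fun x =>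
    (Matrix.posSemidef_sum S fun i _ => posSemidef_gibbsCov x).det_nonneg)
    (integrable_det_sum_gibbsCov hK h S).aestronglyMeasurable, lintegral_det_sum_gibbsCov hK h S]

theorem integrable_mixedDensity : Integrable (mixedDensity K h) := by
  rw [mixedDensity_eq_sum_det]
  exact integrable_finsetSum _ fun S _ => (integrable_det_sum_gibbsCov hK h S).const_mul _

theorem integral_mixedDensity : ∫ x, mixedDensity K h x = mixedVolume K := by
  rw [mixedDensity_eq_sum_det, mixedVolume, integral_finsetSum _ fun S _ =>
    (integrable_det_sum_gibbsCov hK h S).const_mul _]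
  simp only [integral_const_mul, integral_det_sum_gibbsCov hK h]

theorem mixedVolume_nonneg : 0 ≤ mixedVolume K := by
  rw [← integral_mixedDensity hK 0]
  exact integral_nonneg (mixedDensity_nonneg K 0)

theorem exists_det_sub_ne_zero_of_mixedVolume_ne_zero (hV : mixedVolume K ≠ 0) :
    ∃ a b : ι → ι → ℝ, (∀ i, a i ∈ K i) ∧ (∀ i, b i ∈ K i) ∧
      (Matrix.of fun i => a i - b i).det ≠ 0 := by
  contrapose! hV
  rw [← integral_mixedDensity hK 0]
  refine integral_eq_zero_of_ae (Filter.Eventually.of_forall fun x => ?_)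
  rw [mixedDensity_eq_sum]
  refine Finset.sum_eq_zero fun e he => ?_
  have hmem := fun i => Finset.mem_product.1 (Fintype.mem_piFinset.1 he i)
  rw [hV _ _ (fun i => (hmem i).1) fun i => (hmem i).2, zero_pow two_ne_zero, mul_zero]

end Nonempty

end MixedVolume

/-! ### Determinants of transversals and the mixed volume -/

section DeterminantBound

variable {ι : Type*} [Fintype ι]

theorem one_div_five_le_gibbsWeight {s : Finset (ι → ℝ)} {a b x : ι → ℝ} {T : ℝ} (ha : a ∈ s)
    (hb : b ∈ s) (hab : (b - a) ⬝ᵥ x ≤ 1) (hT : logPartition s 0 x - T ≤ a ⬝ᵥ x) :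
    1 / 5 ≤ gibbsWeight s (Set.indicator {a, b}ᶜ fun _ => -T) x a := by
  classical
  have hterm : ∀ e ∈ s, Real.exp (e ⬝ᵥ x + Set.indicator {a, b}ᶜ (fun _ => -T) e) ≤
      (if e = a then Real.exp (e ⬝ᵥ x) else 0) + (if e = b then Real.exp (e ⬝ᵥ x) else 0) +
        Real.exp (e ⬝ᵥ x) * Real.exp (-T) := by
    intro e _
    have hpos := mul_pos (Real.exp_pos (e ⬝ᵥ x)) (Real.exp_pos (-T))
    have hpos' := Real.exp_pos (e ⬝ᵥ x)
    by_cases hea : e = a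
    · simp only [hea, Set.indicator, Set.mem_compl_iff, Set.mem_insert_iff, true_or,
        not_true_eq_false, if_false, if_true, add_zero] at hpos hpos' ⊢
      split_ifs <;> linarith
    by_cases heb : e = b
    · subst heb
      simpa [hea] using hpos.le
    · simp [hea, heb, Real.exp_add]
  have hsum : ∑ e ∈ s, Real.exp (e ⬝ᵥ x) * Real.exp (-T) ≤ Real.exp (a ⬝ᵥ x) := by
    have hexp := exp_logPartition (h := 0) ⟨a, ha⟩ x
    simp only [Pi.zero_apply, add_zero] at hexp
    rw [← Finset.sum_mul, ← hexp, ← Real.exp_add]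
    exact Real.exp_le_exp.2 hT
  have hb' : Real.exp (b ⬝ᵥ x) ≤ 3 * Real.exp (a ⬝ᵥ x) := by
    rw [sub_dotProduct] at hab
    calc Real.exp (b ⬝ᵥ x) ≤ Real.exp (1 + a ⬝ᵥ x) := Real.exp_le_exp.2 (by linarith)
      _ = Real.exp 1 * Real.exp (a ⬝ᵥ x) := Real.exp_add _ _
      _ ≤ 3 * Real.exp (a ⬝ᵥ x) := by gcongr; exact Real.exp_one_lt_three.le
  have htotal := Finset.sum_le_sum hterm
  rw [← exp_logPartition ⟨a, ha⟩, Finset.sum_add_distrib, Finset.sum_add_distrib,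
    Finset.sum_ite_eq', Finset.sum_ite_eq', if_pos ha, if_pos hb] at htotal
  have ha' : Set.indicator {a, b}ᶜ (fun _ => -T) a = 0 := by simp
  rw [gibbsWeight, ha', add_zero, Real.exp_sub, div_le_div_iff₀ (by norm_num) (Real.exp_pos _)]
  linarith

-- Lowering the log-weights of all other points far enough concentrates the Gibbs measure on the
-- pair `{a, b}` uniformly over a compact set.
theorem exists_one_div_five_le_gibbsWeight {s : Finset (ι → ℝ)} {a b : ι → ℝ} (ha : a ∈ s)
    (hb : b ∈ s) {C : Set (ι → ℝ)} (hC : IsCompact C) :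
    ∃ h : (ι → ℝ) → ℝ, ∀ x ∈ C, |(a - b) ⬝ᵥ x| ≤ 1 →
      1 / 5 ≤ gibbsWeight s h x a ∧ 1 / 5 ≤ gibbsWeight s h x b := by
  have hbound : ∀ c : ι → ℝ, BddAbove ((fun x => logPartition s 0 x - c ⬝ᵥ x) '' C) := fun c =>
    hC.bddAbove_image <| Continuous.continuousOn <| continuous_iff_continuousAt.2 fun x =>
      ((hasFDerivAt_logPartition ⟨a, ha⟩ x).sub (hasFDerivAt_dotProduct c x)).continuousAt
  obtain ⟨Ta, hTa⟩ := hbound a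
  obtain ⟨Tb, hTb⟩ := hbound b
  refine ⟨Set.indicator {a, b}ᶜ fun _ => -max Ta Tb, fun x hx hab => ?_⟩
  rw [sub_dotProduct, abs_le] at hab
  have hxa := (hTa (Set.mem_image_of_mem _ hx)).trans (le_max_left Ta Tb)
  have hxb := (hTb (Set.mem_image_of_mem _ hx)).trans (le_max_right Ta Tb)
  refine ⟨one_div_five_le_gibbsWeight ha hb ?_ (by linarith), ?_⟩
  · rw [sub_dotProduct]
    linarith
  · rw [Set.pair_comm]
    refine one_div_five_le_gibbsWeight hb ha ?_ (by linarith)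
    rw [sub_dotProduct]
    linarith

variable [DecidableEq ι]

theorem preimage_toLin'_eq_image_toLin'_inv {U : Matrix ι ι ℝ} (hU : U.det ≠ 0)
    (s : Set (ι → ℝ)) : Matrix.toLin' U ⁻¹' s = Matrix.toLin' U⁻¹ '' s := by
  have hUnit := isUnit_iff_ne_zero.2 hU
  refine (congrFun (Set.image_eq_preimage_of_inverse (fun x => ?_) fun x => ?_) s).symm
  · simp [Matrix.mul_nonsing_inv _ hUnit]
  · simp [Matrix.nonsing_inv_mul _ hUnit]

theorem volume_preimage_Icc_neg_one_one {U : Matrix ι ι ℝ} (hU : U.det ≠ 0) :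
    volume (Matrix.toLin' U ⁻¹' Set.Icc (-1) 1) =
      ENNReal.ofReal (2 ^ Fintype.card ι / |U.det|) := by
  rw [Measure.addHaar_preimage_linearMap _ (by rwa [LinearMap.det_toLin']), LinearMap.det_toLin',
    Real.volume_Icc_pi, ← ENNReal.ofReal_prod_of_nonneg (by simp),
    ← ENNReal.ofReal_mul (abs_nonneg _), abs_inv, div_eq_inv_mul]
  norm_num

theorem exists_forall_le_mixedDensity {K : ι → Finset (ι → ℝ)} {a b : ι → ι → ℝ}
    (ha : ∀ i, a i ∈ K i) (hb : ∀ i, b i ∈ K i) {C : Set (ι → ℝ)} (hC : IsCompact C)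
    (hC_le : ∀ x ∈ C, ∀ i, |(a i - b i) ⬝ᵥ x| ≤ 1) :
    ∃ h : ι → (ι → ℝ) → ℝ, ∀ x ∈ C, (1 / 50) ^ Fintype.card ι *
      (Matrix.of fun i => a i - b i).det ^ 2 ≤ mixedDensity K h x := by
  choose h hh using fun i => exists_one_div_five_le_gibbsWeight (ha i) (hb i) hC
  refine ⟨h, fun x hx => le_trans ?_ (prod_mul_det_sq_le_mixedDensity h ha hb x)⟩
  refine mul_le_mul_of_nonneg_right ?_ (sq_nonneg _)
  rw [← Finset.card_univ, ← Finset.prod_const]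
  refine Finset.prod_le_prod (fun _ _ => by norm_num) fun i _ => ?_
  obtain ⟨hai, hbi⟩ := hh i x hx (hC_le x hx i)
  nlinarith

-- Integrate the mixed density over the box `{x | ∀ i, |⟨a i - b i, x⟩| ≤ 1}`, whose volume is
-- `2 ^ n / |det|`.
theorem abs_det_sub_le_mixedVolume {K : ι → Finset (ι → ℝ)} {a b : ι → ι → ℝ}
    (ha : ∀ i, a i ∈ K i) (hb : ∀ i, b i ∈ K i) :
    |(Matrix.of fun i => a i - b i).det| ≤ 25 ^ Fintype.card ι * mixedVolume K := by
  have hK : ∀ i, (K i).Nonempty := fun i => ⟨a i, ha i⟩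
  set U : Matrix ι ι ℝ := Matrix.of fun i => a i - b i
  rcases eq_or_ne U.det 0 with hdet | hdet
  · rw [hdet, abs_zero]
    exact mul_nonneg (by positivity) (mixedVolume_nonneg hK)
  set P := Matrix.toLin' U ⁻¹' Set.Icc (-1) 1 with hP
  have hcompact : IsCompact P := by
    rw [hP, preimage_toLin'_eq_image_toLin'_inv hdet]
    exact isCompact_Icc.image (LinearMap.continuous_of_finiteDimensional _)
  have hvol := volume_preimage_Icc_neg_one_one hdet
  obtain ⟨h, hlower⟩ := exists_forall_le_mixedDensity ha hb hcompact
    fun x hx i => abs_le.2 ⟨hx.1 i, hx.2 i⟩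
  have hint := integrable_mixedDensity hK h
  have hconst : (1 / 50) ^ Fintype.card ι * U.det ^ 2 * (2 ^ Fintype.card ι / |U.det|) =
      |U.det| / 25 ^ Fintype.card ι := by
    rw [one_div, inv_pow, show (50 : ℝ) = 25 * 2 by norm_num, mul_pow, ← sq_abs]
    field_simp
  rw [← div_le_iff₀' (by positivity), ← hconst]
  calc (1 / 50) ^ Fintype.card ι * U.det ^ 2 * (2 ^ Fintype.card ι / |U.det|)
      = ∫ _ in P, (1 / 50) ^ Fintype.card ι * U.det ^ 2 := by
        rw [setIntegral_const, Measure.real, hvol, ENNReal.toReal_ofReal (by positivity),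
          smul_eq_mul, mul_comm]
    _ ≤ ∫ x in P, mixedDensity K h x :=
        setIntegral_mono_on (integrableOn_const (hvol ▸ ENNReal.ofReal_ne_top))
          hint.integrableOn hcompact.measurableSet hlower
    _ ≤ ∫ x, mixedDensity K h x :=
        setIntegral_le_integral hint (Filter.Eventually.of_forall (mixedDensity_nonneg K h))
    _ = mixedVolume K := integral_mixedDensity hK h

end DeterminantBound

/-! ### Determinants along geodesics -/

theorem abs_det_le_factorial_mul_prod {κ : Type*} [Fintype κ] [DecidableEq κ] {R : Type*}
    [CommRing R] [LinearOrder R] [IsStrictOrderedRing R] (M : Matrix κ κ R) {c : κ → R}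
    (hM : ∀ i j, |M i j| ≤ c i) :
    |M.det| ≤ (Fintype.card κ).factorial * ∏ i, c i :=
  calc |M.det| = |∑ σ : Equiv.Perm κ, ((Equiv.Perm.sign σ : ℤ) : R) * ∏ i, M (σ i) i| := by
        rw [Matrix.det_apply']
    _ ≤ ∑ σ : Equiv.Perm κ, |((Equiv.Perm.sign σ : ℤ) : R) * ∏ i, M (σ i) i| :=
        Finset.abs_sum_le_sum_abs _ _
    _ = ∑ σ : Equiv.Perm κ, ∏ i, |M (σ i) i| := by
        simp only [abs_mul, abs_unit_intCast, one_mul, Finset.abs_prod]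
    _ ≤ ∑ σ : Equiv.Perm κ, ∏ i, c (σ i) := by
        gcongr with σ _ i _
        exact hM (σ i) i
    _ = (Fintype.card κ).factorial * ∏ i, c i := by
        simp [Equiv.prod_comp, Fintype.card_perm]

section Hessenberg

variable {k : ℕ} {N : Matrix (Fin (k + 1)) (Fin (k + 1)) ℤ}

theorem det_submatrix_last_zero (hzero : ∀ l m : Fin (k + 1), (l : ℕ) + 1 < m → N l m = 0) :
    (N.submatrix (Fin.last k).succAbove (Fin.succAbove 0)).det =
      ∏ l : Fin k, N l.castSucc l.succ := by
  rw [Matrix.det_of_isLowerTriangular]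
  · simp
  · intro l m hlm
    have hlt : l < m := hlm
    simpa using hzero l.castSucc m.succ (by simpa using hlt)

variable {B : ℤ} (hB : 1 ≤ B) (hzero : ∀ l m : Fin (k + 1), (l : ℕ) + 1 < m → N l m = 0)
  (hsup : ∀ l : Fin k, N l.castSucc l.succ ≠ 0)
  (hlow : ∀ l m, m ≤ l → l ≠ Fin.last k ∨ m ≠ 0 → |N l m| ≤ B)
include hB hzero hsup hlow

theorem abs_castSucc_le_mul_abs_superdiagonal (l : Fin k) (m : Fin (k + 1)) :
    |N l.castSucc m| ≤ B * |N l.castSucc l.succ| := by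
  rcases lt_trichotomy ((l : ℕ) + 1) m with h | h | h
  · rw [hzero _ _ h, abs_zero]
    exact mul_nonneg (by lia) (abs_nonneg _)
  · obtain rfl : m = l.succ := Fin.ext h.symm
    exact le_mul_of_one_le_left (abs_nonneg _) hB
  · exact (hlow _ _ (Fin.le_def.2 (Nat.lt_succ_iff.1 h)) (.inl (Fin.castSucc_ne_last l))).trans
      (le_mul_of_one_le_right (by lia) (Int.one_le_abs (hsup l)))

-- Expand `N.det` along the last row: dividing by the superdiagonal product leaves bounded terms.
theorem abs_last_zero_le_of_abs_det_le {Q : ℤ} (hdet : |N.det| ≤ Q) :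
    |N (Fin.last k) 0| ≤ Q + k * (B * (k.factorial * B ^ k)) := by
  set s : Fin k → ℤ := fun l => |N l.castSucc l.succ|
  have hS : 1 ≤ ∏ l, s l := Finset.prod_pos fun l _ => abs_pos.2 (hsup l)
  have hminor : ∀ m : Fin k, |(N.submatrix (Fin.last k).succAbove m.succ.succAbove).det| ≤
      k.factorial * B ^ k * ∏ l, s l := fun m => by
    simpa [Finset.prod_mul_distrib, mul_assoc] using
      abs_det_le_factorial_mul_prod (N.submatrix (Fin.last k).succAbove m.succ.succAbove)
        (c := fun l => B * s l) (fun l j => by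
          simpa using abs_castSucc_le_mul_abs_superdiagonal hB hzero hsup hlow l _)
  set t : Fin k → ℤ := fun m => (-1) ^ ((Fin.last k : ℕ) + (m.succ : ℕ)) * N (Fin.last k) m.succ *
    (N.submatrix (Fin.last k).succAbove m.succ.succAbove).det
  have ht : |∑ m, t m| ≤ k * (B * (k.factorial * B ^ k * ∏ l, s l)) := by
    suffices ∀ m, |t m| ≤ B * (k.factorial * B ^ k * ∏ l, s l) by
      simpa using (Finset.abs_sum_le_sum_abs _ _).trans
        (Finset.sum_le_card_nsmul Finset.univ _ _ fun m _ => this m)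
    intro m
    simp only [t, abs_mul, abs_neg_one_pow, one_mul]
    exact mul_le_mul (hlow _ _ (Fin.le_last _) (.inr m.succ_ne_zero)) (hminor m) (abs_nonneg _)
      (by lia)
  have hcorner : N.det = (-1) ^ k * N (Fin.last k) 0 * ∏ l : Fin k, N l.castSucc l.succ +
      ∑ m, t m := by
    rw [Matrix.det_succ_row N (Fin.last k), Fin.sum_univ_succ, det_submatrix_last_zero hzero]
    simp [t]
  refine le_of_mul_le_mul_right ?_ (zero_lt_one.trans_le hS)
  calc |N (Fin.last k) 0| * ∏ l, s l = |N.det - ∑ m, t m| := by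
        rw [hcorner, add_sub_cancel_right, abs_mul, abs_mul, abs_neg_one_pow, one_mul,
          Finset.abs_prod]
    _ ≤ |N.det| + |∑ m, t m| := abs_sub _ _
    _ ≤ Q * ∏ l, s l + k * (B * (k.factorial * B ^ k * ∏ l, s l)) := by
        gcongr
        exact hdet.trans (le_mul_of_one_le_right ((abs_nonneg _).trans hdet) hS)
    _ = _ := by ring

end Hessenberg

section Geodesic

variable {α : Type*} {r : SetRel α α}

/-- A chain of `r`-related elements is geodesic if no chain with the same endpoints is shorter. -/
def IsGeodesic (p : RelSeries r) : Prop :=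
  ∀ q : RelSeries r, q.head = p.head → q.last = p.last → p.length ≤ q.length

theorem exists_isGeodesic (p : RelSeries r) :
    ∃ q : RelSeries r, q.head = p.head ∧ q.last = p.last ∧ IsGeodesic q := by
  obtain ⟨q, ⟨hhead, hlast⟩, hmin⟩ := exists_minimalFor_of_wellFoundedLT
    (fun q : RelSeries r => q.head = p.head ∧ q.last = p.last) RelSeries.length ⟨p, rfl, rfl⟩
  refine ⟨q, hhead, hlast, fun q' hhead' hlast' => ?_⟩
  by_contra! hlt
  exact hlt.not_ge (hmin ⟨hhead'.trans hhead, hlast'.trans hlast⟩ hlt.le)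

theorem exists_relSeries_of_le (p : RelSeries r) {a b : Fin (p.length + 1)} (hab : a ≤ b) :
    ∃ q : RelSeries r, q.head = p a ∧ q.last = p b ∧ q.length = b - a := by
  refine ⟨(p.take b).drop ⟨a, Nat.lt_succ_of_le hab⟩, ?_, ?_, rfl⟩
  · rw [RelSeries.head_drop]; rfl
  · rw [RelSeries.last_drop, RelSeries.last_take]

namespace IsGeodesic

variable {p : RelSeries r} (hp : IsGeodesic p)
include hp

theorem le_add_length {a b : Fin (p.length + 1)} {q : RelSeries r} (hhead : q.head = p a)
    (hlast : q.last = p b) : (b : ℕ) ≤ a + q.length := by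
  have hdrop : q.last = (p.drop b).head := by rw [hlast, RelSeries.head_drop]
  have htake : (p.take a).last = (q.smash (p.drop b) hdrop).head := by
    rw [RelSeries.last_take, RelSeries.head_smash, hhead]
  have hle := hp ((p.take a).smash (q.smash (p.drop b) hdrop) htake) (by simp) (by simp)
  change p.length ≤ a + (q.length + (p.length - b)) at hle
  lia

theorem injective : Function.Injective p.toFun := fun a b hab =>
  Fin.ext (le_antisymm
    (hp.le_add_length (q := .singleton r (p b)) rfl hab.symm)
    (hp.le_add_length (q := .singleton r (p a)) rfl hab))

theorem not_rel {a b : Fin (p.length + 1)} (hab : (a : ℕ) + 1 < b) : (p a, p b) ∉ r := fun hr =>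
  hab.not_ge (hp.le_add_length (q := (RelSeries.singleton r (p b)).cons (p a) hr)
    (RelSeries.head_cons ..) (RelSeries.last_cons ..))

end IsGeodesic

end Geodesic

section CoordinateBound

variable {ι : Type*}

/-- The relation on indices along which nonzero coordinates propagate: `j` is related to `i` if
some vector of `C j` has nonzero `i`-th coordinate. -/
def supportRel (C : ι → Set (ι → ℤ)) : SetRel ι ι :=
  {e | ∃ x ∈ C e.1, x e.2 ≠ 0}

/-- An explicit bound for the coordinate `x p.head` of the vectors `x ∈ C p.last`, where `p` is a
chain for `supportRel C` of length less than the second argument and `Q` bounds the determinants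
of the transversals of `C`. -/
def coordBound (Q : ℤ) : ℕ → ℤ
  | 0 => 1
  | k + 1 => max (coordBound Q k)
      (Q + k * (coordBound Q k * (k.factorial * coordBound Q k ^ k)))

theorem one_le_coordBound (Q : ℤ) : ∀ k, 1 ≤ coordBound Q k
  | 0 => le_rfl
  | k + 1 => (one_le_coordBound Q k).trans (le_max_left _ _)

variable [Fintype ι] [DecidableEq ι]

theorem det_extend_single {κ : Type*} [Fintype κ] [DecidableEq κ] {p : κ → ι}
    (hp : Function.Injective p) (w : κ → ι → ℤ) (d : ℤ) :
    (Matrix.of (Function.extend p w fun i => Pi.single i d)).det =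
      (Matrix.of fun l m => w l (p m)).det * d ^ Fintype.card {i // i ∉ Set.range p} := by
  set W : ι → ι → ℤ := Function.extend p w fun i => Pi.single i d
  have hW_range : ∀ l, W (p l) = w l := fun l => hp.extend_apply _ _ l
  have hW_compl : ∀ i, i ∉ Set.range p → W i = Pi.single i d := fun i hi =>
    Function.extend_apply' _ _ i hi
  rw [Matrix.twoBlockTriangular_det (Matrix.of W) (· ∈ Set.range p) fun i hi j hj => by
    rw [Matrix.of_apply, hW_compl i hi, Pi.single_eq_of_ne (ne_of_mem_of_not_mem hj hi)]]
  congr 1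
  · convert (Matrix.det_submatrix_equiv_self (Equiv.ofInjective p hp) _).symm using 2
    ext l m
    simp [Matrix.toSquareBlockProp_def, hW_range]
  · have hdiag : (Matrix.of W).toSquareBlockProp (· ∉ Set.range p) =
        Matrix.diagonal fun _ => d := by
      ext i j
      simp [Matrix.toSquareBlockProp_def, hW_compl i i.2, Matrix.diagonal_apply,
        Pi.single_apply, Subtype.ext_iff, eq_comm]
    rw [hdiag, Matrix.det_diagonal, Finset.prod_const, Finset.card_univ]

variable {C : ι → Set (ι → ℤ)} {d Q : ℤ} (hd : d ≠ 0) (hsingle : ∀ i, Pi.single i d ∈ C i)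
  (hdet : ∀ w : ι → ι → ℤ, (∀ i, w i ∈ C i) → |(Matrix.of w).det| ≤ Q)
include hd hsingle hdet

theorem abs_det_principal_le {κ : Type*} [Fintype κ] [DecidableEq κ] {p : κ → ι}
    (hp : Function.Injective p) {w : κ → ι → ℤ} (hw : ∀ l, w l ∈ C (p l)) :
    |(Matrix.of fun l m => w l (p m)).det| ≤ Q := by
  have hmem : ∀ i, Function.extend p w (fun i => Pi.single i d) i ∈ C i := by
    intro i
    by_cases hi : i ∈ Set.range p
    · obtain ⟨l, rfl⟩ := hi
      rw [hp.extend_apply]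
      exact hw l
    · rw [Function.extend_apply' _ _ i hi]
      exact hsingle i
  have hle := hdet _ hmem
  rw [det_extend_single hp, abs_mul, abs_pow] at hle
  exact (le_mul_of_one_le_right (abs_nonneg _) (one_le_pow₀ (Int.one_le_abs hd))).trans hle

theorem abs_head_le_of_isGeodesic {B : ℤ} (hB : 1 ≤ B) {p : RelSeries (supportRel C)}
    (hp : IsGeodesic p)
    (hshort : ∀ q : RelSeries (supportRel C), q.length < p.length →
      ∀ y ∈ C q.last, |y q.head| ≤ B)
    {x : ι → ℤ} (hx : x ∈ C p.last) :
    |x p.head| ≤ Q + p.length * (B * (p.length.factorial * B ^ p.length)) := by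
  choose w hw hw_ne using p.step
  let row : Fin (p.length + 1) → ι → ℤ := Fin.snoc (α := fun _ => ι → ℤ) w x
  have hrow : ∀ l, row l ∈ C (p l) :=
    Fin.lastCases (by simpa [row, RelSeries.apply_last] using hx) fun l => by simpa [row] using hw l
  have hle := abs_last_zero_le_of_abs_det_le (N := Matrix.of fun l m => row l (p m)) hB
    (fun l m hlm => by_contra fun hne => hp.not_rel hlm ⟨row l, hrow l, hne⟩)
    (fun l => by simpa [row] using hw_ne l)
    (fun l m hml hcorner => by
      obtain ⟨q, hhead, hlast, hlength⟩ := exists_relSeries_of_le p hml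
      have hlt : q.length < p.length := by
        simp only [ne_eq, Fin.ext_iff, Fin.val_last, Fin.val_zero] at hcorner
        lia
      simpa [hhead] using hshort q hlt (row l) (hlast ▸ hrow l))
    (abs_det_principal_le hd hsingle hdet hp.injective hrow)
  simpa [row, RelSeries.apply_zero] using hle

theorem abs_head_le_coordBound (k : ℕ) : ∀ p : RelSeries (supportRel C), p.length < k →
    ∀ x ∈ C p.last, |x p.head| ≤ coordBound Q k := by
  induction k with
  | zero => exact fun p hp => absurd hp p.length.not_lt_zero
  | succ k ih =>
    intro p hpk x hx
    obtain ⟨q, hhead, hlast, hq⟩ := exists_isGeodesic p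
    rw [← hlast] at hx
    rw [← hhead]
    have hqk : q.length ≤ k := (hq p hhead.symm hlast.symm).trans (Nat.le_of_lt_succ hpk)
    rcases hqk.lt_or_eq with hlt | rfl
    · exact (ih q hlt x hx).trans (le_max_left _ _)
    · exact (abs_head_le_of_isGeodesic hd hsingle hdet (one_le_coordBound Q _) hq ih hx).trans
        (le_max_right _ _)

theorem abs_le_coordBound
    (hconn : ∀ I : Finset ι, I.Nonempty → I ≠ Finset.univ →
      ∃ i ∈ I, ∃ x ∈ C i, ∃ j ∉ I, x j ≠ 0)
    {i : ι} {x : ι → ℤ} (hx : x ∈ C i) (j : ι) : |x j| ≤ coordBound Q (Fintype.card ι) := by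
  classical
  have hreach : (Finset.univ.filter fun l => ∃ p : RelSeries (supportRel C),
      p.head = j ∧ p.last = l) = Finset.univ := by
    by_contra hne
    obtain ⟨l, hl, y, hy, m, hm, hym⟩ := hconn _
      ⟨j, Finset.mem_filter.2 ⟨Finset.mem_univ j, .singleton _ j, rfl, rfl⟩⟩ hne
    obtain ⟨p, hhead, rfl⟩ := (Finset.mem_filter.1 hl).2
    exact hm (Finset.mem_filter.2 ⟨Finset.mem_univ m, p.snoc m ⟨y, hy, hym⟩,
      (p.head_snoc ..).trans hhead, p.last_snoc ..⟩)
  obtain ⟨p, rfl, rfl⟩ := (Finset.mem_filter.1 (hreach ▸ Finset.mem_univ i)).2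
  obtain ⟨q, hhead, hlast, hq⟩ := exists_isGeodesic p
  have hlength : q.length < Fintype.card ι := by
    simpa using Fintype.card_le_of_injective _ hq.injective
  rw [← hlast] at hx
  exact hhead ▸ abs_head_le_coordBound hd hsingle hdet _ q hlength x hx

end CoordinateBound

/-! ### Equivalence of tuples and charts -/

section Chart

variable {ι : Type*}

/-- Two tuples of finite sets in `ℤ^ι` are equivalent if they differ by an automorphism of `ℤ^ι`
and independent translations of the sets. -/
def LatticeEquivalent [DecidableEq (ι → ℤ)] (A B : ι → Finset (ι → ℤ)) : Prop :=
  ∃ (φ : (ι → ℤ) ≃+ (ι → ℤ)) (v : ι → ι → ℤ), ∀ i, B i = (A i).image fun a => φ a + v i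

theorem latticeEquivalent_of_range_eq [DecidableEq (ι → ℤ)] {A B : ι → Finset (ι → ℤ)}
    {Ψ Ψ' : (ι → ℤ) →ₗ[ℤ] (ι → ℤ)} (hΨ : Function.Injective Ψ) (hΨ' : Function.Injective Ψ')
    {b b' : ι → ι → ℤ} (hrange : LinearMap.range Ψ = LinearMap.range Ψ')
    (himage : ∀ i, (A i).image (fun a => Ψ (a - b i)) = (B i).image (fun a => Ψ' (a - b' i))) :
    LatticeEquivalent A B := by
  let e : (ι → ℤ) ≃ₗ[ℤ] (ι → ℤ) := (LinearEquiv.ofInjective Ψ hΨ).trans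
    ((LinearEquiv.ofEq _ _ hrange).trans (LinearEquiv.ofInjective Ψ' hΨ').symm)
  have he : ∀ x, Ψ' (e x) = Ψ x := fun x => congrArg Subtype.val
    ((LinearEquiv.ofInjective Ψ' hΨ').apply_symm_apply
      (LinearEquiv.ofEq _ _ hrange (LinearEquiv.ofInjective Ψ hΨ x)))
  refine ⟨e.toAddEquiv, fun i => b' i - e (b i), fun i => ?_⟩
  have hinj : Function.Injective fun a => Ψ' (a - b' i) := hΨ'.comp sub_left_injective
  refine Finset.image_injective hinj ?_
  rw [← himage, Finset.image_image]
  refine Finset.image_congr fun a _ => ?_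
  calc Ψ (a - b i) = Ψ' (e (a - b i)) := (he _).symm
    _ = Ψ' (e a + (b' i - e (b i)) - b' i) := by rw [map_sub]; congr 1; abel

theorem finite_setOf_forall_single_mem [Finite ι] [DecidableEq ι] (N : ℕ) [NeZero N] :
    {L : Submodule ℤ (ι → ℤ) | ∀ i, Pi.single i (N : ℤ) ∈ L}.Finite := by
  have := Fintype.ofFinite ι
  let f : (ι → ℤ) →+ (ι → ZMod N) := (Int.castAddHom (ZMod N)).compLeft ι
  have hker : ∀ L : Submodule ℤ (ι → ℤ), (∀ i, Pi.single i (N : ℤ) ∈ L) →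
      f.ker ≤ L.toAddSubgroup := by
    intro L hL x hx
    have hdvd : ∀ i, (N : ℤ) ∣ x i := fun i =>
      (ZMod.intCast_zmod_eq_zero_iff_dvd (x i) N).1 (congrFun hx i)
    choose c hc using hdvd
    have hx_eq : x = ∑ i, c i • Pi.single i (N : ℤ) := by
      ext j
      simp [Finset.sum_apply, Pi.single_apply, hc j, mul_comm]
    rw [hx_eq]
    exact L.sum_mem fun i _ => L.smul_mem _ (hL i)
  refine Set.Finite.of_finite_image (f := fun L => L.toAddSubgroup.map f) (Set.toFinite _) ?_
  intro L hL L' hL' h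
  apply Submodule.toAddSubgroup_injective
  rw [← AddSubgroup.comap_map_eq_self (hker L hL), ← AddSubgroup.comap_map_eq_self (hker L' hL')]
  exact congrArg (AddSubgroup.comap f) h

theorem finite_quot_of_finite_range {α β : Type*} {r : α → α → Prop} {f : α → β}
    (hf : (Set.range f).Finite) (hr : ∀ a b, f a = f b → r a b) : Finite (Quot r) := by
  have := hf.to_subtype
  refine Finite.of_injective (fun q : Quot r => (⟨f q.out, q.out, rfl⟩ : Set.range f))
    fun q q' h => ?_
  rw [← q.out_eq, ← q'.out_eq]
  exact Quot.sound (hr _ _ (congrArg Subtype.val h))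

variable [Fintype ι] [DecidableEq ι]

/-- An injective endomorphism `Ψ` of `ℤ^ι` is a chart for the tuple `A` with base points `b` if its
image contains `N ℤ^ι` and it maps each translate `A i - b i` into the cube of radius `R`. -/
structure IsChart (N : ℕ) (R : ℤ) (A : ι → Finset (ι → ℤ)) (Ψ : (ι → ℤ) →ₗ[ℤ] (ι → ℤ))
    (b : ι → ι → ℤ) : Prop where
  injective : Function.Injective Ψ
  single_mem_range : ∀ i, Pi.single i (N : ℤ) ∈ LinearMap.range Ψ
  abs_le : ∀ i, ∀ a ∈ A i, ∀ j, |Ψ (a - b i) j| ≤ R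

theorem finite_quot_latticeEquivalent_of_isChart (N : ℕ) [NeZero N] (R : ℤ)
    {𝒜 : Set (ι → Finset (ι → ℤ))} (h𝒜 : ∀ A ∈ 𝒜, ∃ Ψ b, IsChart N R A Ψ b) :
    Finite (Quot fun A B : 𝒜 => LatticeEquivalent A.1 B.1) := by
  choose Ψ b hchart using fun A : 𝒜 => h𝒜 A.1 A.2
  let f : 𝒜 → Submodule ℤ (ι → ℤ) × (ι → Finset (ι → ℤ)) := fun A =>
    (LinearMap.range (Ψ A), fun i => (A.1 i).image fun a => Ψ A (a - b A i))
  refine finite_quot_of_finite_range (f := f) ?_ fun A B hAB =>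
    latticeEquivalent_of_range_eq (hchart A).injective (hchart B).injective
      (congrArg Prod.fst hAB) fun i => congrFun (congrArg Prod.snd hAB) i
  refine ((finite_setOf_forall_single_mem N).prod (Set.Finite.pi' fun _ =>
    (Finset.Icc (fun _ => -R) fun _ => R).powerset.finite_toSet)).subset ?_
  rintro _ ⟨A, rfl⟩
  refine ⟨(hchart A).single_mem_range, fun i => ?_⟩
  simp only [f, Finset.coe_powerset, Set.mem_preimage, Set.mem_powerset_iff, Finset.coe_subset,
    Finset.image_subset_iff, Finset.mem_Icc]
  exact fun a ha => ⟨fun j => (abs_le.1 ((hchart A).abs_le i a ha j)).1,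
    fun j => (abs_le.1 ((hchart A).abs_le i a ha j)).2⟩

end Chart

/-! ### Charts of irreducible tuples -/

section Cramer

variable {ι : Type*} [Fintype ι] [DecidableEq ι] {R : Type*} [CommRing R]

theorem cramer_injective [IsDomain R] {U : Matrix ι ι R} (hU : U.det ≠ 0) :
    Function.Injective U.cramer := fun x y hxy =>
  smul_right_injective (ι → R) hU (by
    simpa only [Matrix.mulVec_cramer] using congrArg U.mulVec hxy)

theorem det_of_cramer_transpose (U : Matrix ι ι R) (w : ι → ι → R) :
    (Matrix.of fun i => U.transpose.cramer (w i)).det =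
      (Matrix.of w).det * U.det ^ (Fintype.card ι - 1) := by
  have hmul : (Matrix.of fun i => U.transpose.cramer (w i)) = Matrix.of w * U.adjugate := by
    ext i j
    rw [Matrix.of_apply, Matrix.cramer_eq_adjugate_mulVec, ← Matrix.adjugate_transpose,
      Matrix.mulVec_transpose]
    rfl
  rw [hmul, Matrix.det_mul, Matrix.det_adjugate]

end Cramer

section IrreducibleTuple

variable {n : ℕ} {A : Fin n → Finset (Fin n → ℤ)}

theorem IsIrreducibleTuple.exists_apply_sub_ne_zero (hA : IsIrreducibleTuple A)
    {Ψ : (Fin n → ℤ) →ₗ[ℤ] (Fin n → ℤ)} (hΨ : Function.Injective Ψ) (b : Fin n → Fin n → ℤ)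
    {I : Finset (Fin n)} (hI : I.Nonempty) (hI_univ : I ≠ Finset.univ) :
    ∃ i ∈ I, ∃ a ∈ A i, ∃ j ∉ I, Ψ (a - b i) j ≠ 0 := by
  by_contra! hsupp
  let L : Submodule ℤ (Fin n → ℤ) := (Submodule.pi (I : Set (Fin n))ᶜ fun _ => ⊥).comap Ψ
  have hL : ∀ x, x ∈ L ↔ ∀ j ∉ I, Ψ x j = 0 := fun x => by simp [L, Submodule.mem_pi]
  refine hA ⟨I, L, hI.card_pos, ?_, ?_, fun i hi => ⟨b i, fun a ha => (hL _).2 (hsupp i hi a ha)⟩⟩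
  · simpa using (Finset.card_lt_iff_ne_univ I).2 hI_univ
  · let g : L →ₗ[ℤ] (I → ℤ) := LinearMap.funLeft ℤ ℤ Subtype.val ∘ₗ Ψ ∘ₗ L.subtype
    have hg : Function.Injective g := by
      intro x y hxy
      refine Subtype.ext (hΨ (funext fun j => ?_))
      by_cases hj : j ∈ I
      · exact congrFun hxy ⟨j, hj⟩
      · rw [(hL x).1 x.2 j hj, (hL y).1 y.2 j hj]
    simpa using LinearMap.finrank_le_finrank_of_injective hg

theorem IsIrreducibleTuple.exists_isChart (hA : IsIrreducibleTuple A) {D : ℕ}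
    (hD : ∀ a b : Fin n → Fin n → ℤ, (∀ i, a i ∈ A i) → (∀ i, b i ∈ A i) →
      |(Matrix.of fun i => a i - b i).det| ≤ D)
    {a b : Fin n → Fin n → ℤ} (ha : ∀ i, a i ∈ A i) (hb : ∀ i, b i ∈ A i)
    (hdet : (Matrix.of fun i => a i - b i).det ≠ 0) :
    ∃ Ψ, IsChart D.factorial (coordBound (D * D ^ (n - 1)) n) A Ψ b := by
  set U : Matrix (Fin n) (Fin n) ℤ := Matrix.of fun i => a i - b i
  set Ψ := U.transpose.cramer
  have hrow : ∀ i, Ψ (a i - b i) = Pi.single i U.det := Matrix.cramer_transpose_row_self U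
  have hΨ : Function.Injective Ψ := cramer_injective (by rwa [Matrix.det_transpose])
  have hUD : |U.det| ≤ D := hD a b ha hb
  refine ⟨Ψ, hΨ, fun i => ?_, fun i p hp j => ?_⟩
  · obtain ⟨c, hc⟩ : U.det ∣ (D.factorial : ℤ) := Int.natAbs_dvd_natAbs.1
      (Nat.dvd_factorial (Int.natAbs_pos.2 hdet) (Nat.cast_le.1 (U.det.abs_eq_natAbs ▸ hUD)))
    exact ⟨c • (a i - b i), by rw [map_smul, hrow, hc, ← Pi.single_smul, smul_eq_mul, mul_comm]⟩
  · let C : Fin n → Set (Fin n → ℤ) := fun i => {x | ∃ p ∈ A i, ∃ q ∈ A i, Ψ (p - q) = x}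
    have hC : ∀ w : Fin n → Fin n → ℤ, (∀ i, w i ∈ C i) →
        |(Matrix.of w).det| ≤ D * D ^ (n - 1) := by
      intro w hw
      choose p hp q hq hpq using hw
      obtain rfl : (fun i => Ψ (p i - q i)) = w := funext hpq
      rw [det_of_cramer_transpose, Fintype.card_fin, abs_mul, abs_pow]
      gcongr
      exact hD p q hp hq
    have hsingle : ∀ i, Pi.single i U.det ∈ C i := fun i => ⟨a i, ha i, b i, hb i, hrow i⟩
    have hsub : ∀ i, ∀ q ∈ A i, Ψ (q - b i) ∈ C i := fun i q hq => ⟨q, hq, b i, hb i, rfl⟩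
    have hconn : ∀ I : Finset (Fin n), I.Nonempty → I ≠ Finset.univ →
        ∃ i ∈ I, ∃ x ∈ C i, ∃ j ∉ I, x j ≠ 0 := fun I hI hI_univ =>
      have ⟨l, hl, q, hq, m, hm, hne⟩ := hA.exists_apply_sub_ne_zero hΨ b hI hI_univ
      ⟨l, hl, _, hsub l q hq, m, hm, hne⟩
    simpa using abs_le_coordBound hdet hsingle hC hconn (hsub i p hp) j

end IrreducibleTuple

/-! ### Lattice mixed volumes -/

section LatticeMixedVolume

variable {n : ℕ} {A : Fin n → Finset (Fin n → ℤ)}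

theorem toR_injective : Function.Injective (toR (n := n)) := fun _ _ h =>
  funext fun j => Int.cast_injective (congrFun h j)

/-- The point configurations in `ℝⁿ` underlying a tuple of finite subsets of `ℤⁿ`. -/
def realPoints (A : Fin n → Finset (Fin n → ℤ)) (i : Fin n) : Finset (Fin n → ℝ) :=
  (A i).map ⟨toR, toR_injective⟩

theorem toR_mem_realPoints {i : Fin n} {a : Fin n → ℤ} (ha : a ∈ A i) : toR a ∈ realPoints A i :=
  Finset.mem_map_of_mem _ ha

theorem MV_eq_mixedVolume (hn : 0 < n) (A : Fin n → Finset (Fin n → ℤ)) :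
    MV A = mixedVolume (realPoints A) := by
  have : NeZero n := ⟨hn.ne'⟩
  have hempty : ∀ S : Finset (Fin n), ¬ S.Nonempty → (-1 : ℝ) ^ Sᶜ.card *
      (volume (convexHull ℝ (∑ i ∈ S, (realPoints A i : Set (Fin n → ℝ))))).toReal = 0 := by
    intro S hS
    rw [Finset.not_nonempty_iff_eq_empty.1 hS, Finset.sum_empty, ← Set.singleton_zero,
      convexHull_singleton, measure_singleton, ENNReal.toReal_zero, mul_zero]
  rw [MV, mixedVolume, Finset.powerset_univ,
    ← Finset.sum_filter_of_ne fun S _ => not_imp_comm.1 (hempty S)]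
  simp [realPoints, Finset.card_compl]

theorem det_toR_sub (a b : Fin n → Fin n → ℤ) :
    (Matrix.of fun i => toR (a i) - toR (b i)).det =
      ((Matrix.of fun i => a i - b i).det : ℝ) := by
  rw [Int.cast_det]
  congr 1
  ext i j
  simp [toR]

theorem nonempty_of_isIrreducibleTuple (hA : IsIrreducibleTuple A) (hMV : MV A ≠ 0) (i : Fin n) :
    (A i).Nonempty := by
  by_contra hempty
  rw [Finset.not_nonempty_iff_eq_empty] at hempty
  rcases (Nat.one_le_of_lt i.pos).eq_or_lt with rfl | hn
  · refine hMV (Finset.sum_eq_zero fun S hS => ?_)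
    obtain rfl : S = {i} := Finset.eq_singleton_iff_nonempty_unique_mem.2
      ⟨(Finset.mem_filter.1 hS).2, fun _ _ => Subsingleton.elim _ _⟩
    simp [hempty]
  · exact hA ⟨{i}, ⊥, by simp, by simpa, by simp, fun j hj => ⟨0, by
      simp [Finset.mem_singleton.1 hj, hempty]⟩⟩

theorem exists_isChart_of_MV_le {V : ℝ} (hA : IsIrreducibleTuple A) (hpos : 0 < MV A)
    (hV : MV A ≤ V) :
    ∃ Ψ b, IsChart ⌊25 ^ n * V⌋₊.factorial
      (coordBound (⌊25 ^ n * V⌋₊ * ⌊25 ^ n * V⌋₊ ^ (n - 1)) n) A Ψ b := by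
  have hn : 0 < n := by
    rw [Nat.pos_iff_ne_zero]
    rintro rfl
    exact hpos.ne' (Finset.sum_eq_zero fun S hS => by simp_all [Finset.eq_empty_of_isEmpty S])
  have hne : ∀ i, (realPoints A i).Nonempty := fun i =>
    (nonempty_of_isIrreducibleTuple hA hpos.ne' i).map
  have hMV := MV_eq_mixedVolume hn A
  have hD : ∀ a b : Fin n → Fin n → ℤ, (∀ i, a i ∈ A i) → (∀ i, b i ∈ A i) →
      |(Matrix.of fun i => a i - b i).det| ≤ ⌊25 ^ n * V⌋₊ := by
    intro a b ha hb
    rw [Int.abs_eq_natAbs, Nat.cast_le]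
    refine Nat.le_floor ?_
    calc (((Matrix.of fun i => a i - b i).det.natAbs : ℕ) : ℝ)
        = |(Matrix.of fun i => toR (a i) - toR (b i)).det| := by
          rw [det_toR_sub, Nat.cast_natAbs, Int.cast_abs]
      _ ≤ 25 ^ Fintype.card (Fin n) * mixedVolume (realPoints A) :=
          abs_det_sub_le_mixedVolume (fun i => toR_mem_realPoints (ha i))
            fun i => toR_mem_realPoints (hb i)
      _ ≤ 25 ^ n * V := by rw [Fintype.card_fin, ← hMV]; gcongr
  obtain ⟨x, y, hx, hy, hdet⟩ :=
    exists_det_sub_ne_zero_of_mixedVolume_ne_zero hne (hMV ▸ hpos.ne')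
  choose a ha hax using fun i => Finset.mem_map.1 (hx i)
  choose b hb hby using fun i => Finset.mem_map.1 (hy i)
  obtain rfl : (fun i => toR (a i)) = x := funext hax
  obtain rfl : (fun i => toR (b i)) = y := funext hby
  rw [det_toR_sub, Int.cast_ne_zero] at hdet
  exact (hA.exists_isChart hD ha hb hdet).imp fun Ψ hΨ => ⟨b, hΨ⟩

end LatticeMixedVolume

theorem finitely_many_irreducible_tuples_general {n : ℕ} (V : ℝ)
    (𝒜 : Set (Fin n → Finset (Fin n → ℤ)))
    (h𝒜 : ∀ A ∈ 𝒜, IsIrreducibleTuple A ∧ 0 < MV A ∧ MV A ≤ V) :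
    Finite (Quot fun A B : 𝒜 => LatticeEquivalent A.1 B.1) :=
  have : NeZero ⌊25 ^ n * V⌋₊.factorial := ⟨Nat.factorial_ne_zero _⟩
  finite_quot_latticeEquivalent_of_isChart _ _ fun A hA =>
    exists_isChart_of_MV_le (h𝒜 A hA).1 (h𝒜 A hA).2.1 (h𝒜 A hA).2.2

/-- Theorem 1.11: for all positive integers `n` and `V` there are only
finitely many irreducible tuples of `n` finite subsets of `ℤⁿ` of lattice mixed volume `V`,
up to automorphisms of the lattice `ℤⁿ` and independent translations of the sets. -/
theorem finitely_many_irreducible_tuples (n V : ℕ) (hn : 0 < n) (hV : 0 < V) :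
    Finite (Quot (fun (A B : {A : Fin n → Finset (Fin n → ℤ) //
        IsIrreducibleTuple A ∧ MV A = (V : ℝ)}) =>
      ∃ (φ : (Fin n → ℤ) ≃+ (Fin n → ℤ)) (v : Fin n → (Fin n → ℤ)),
        ∀ i, B.1 i = (A.1 i).image (fun a => φ a + v i))) :=
  finitely_many_irreducible_tuples_general V {A | IsIrreducibleTuple A ∧ MV A = (V : ℝ)}
    fun _ hA => ⟨hA.1, hA.2 ▸ Nat.cast_pos.2 hV, hA.2.le⟩

end Esterov
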